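/- arXiv:2501.18187 — 2 statements merged into one kernel-verified Lean document; each statement's English description precedes it below -/
import Mathlib

section
/- Let 𝒟 be a probability distribution on ℝ^D × ℝ with E[‖u‖⁴] < ∞, E[v²·‖u‖²] < ∞ and E[v²] < ∞, and suppose Λ = E[u·uᵀ] is invertible. Set Φ = Cov[u·v] = E[(uv − ξ)(uv − ξ)ᵀ] and ξ = E[u·v]. Draw (u_1, v_1), …, (u_{n+1}, v_{n+1}) i.i.d. from 𝒟 and form the prompt ζ ∈ ℝ^{(D+1)×(n+1)} with i-th column (u_i, v_i) for i ≤ n and last column (u_{n+1}, 0). Then for any Γ ∈ ℝ^{D×D}, the one-layer LSA with weights P = [[0_{D×D}, 0], [0, 1]] and Q = [[Γ, 0], [0, 0]] has prediction v̂ = attn(ζ)[D+1, n+1] satisfying E[(v̂ + v_{n+1})²] = inf_{β ∈ ℝ^D} E[(⟨β, u⟩ + v)²] + (1/n)·tr(Γ·Λ·Γᵀ·Φ) + ξᵀ·(Γᵀ + Λ^{−1})ᵀ·Λ·(Γᵀ + Λ^{−1})·ξ. -/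
open MeasureTheory ProbabilityTheory Matrix

noncomputable section

/-- The mask `M = diag(I_n, 0)`. -/
def attnMask (n : ℕ) : Matrix (Fin (n + 1)) (Fin (n + 1)) ℝ :=
  Matrix.diagonal fun i => if i = Fin.last n then 0 else 1

/-- A linear self-attention layer with weights `P, Q`. -/
def attn (D n : ℕ) (P Q : Matrix (Fin (D + 1)) (Fin (D + 1)) ℝ)
    (Z : Matrix (Fin (D + 1)) (Fin (n + 1)) ℝ) : Matrix (Fin (D + 1)) (Fin (n + 1)) ℝ :=
  Z + (n : ℝ)⁻¹ • (P * Z * attnMask n * (Zᵀ * Q * Z))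

/-- The sparse value matrix `P = [[0,0],[0,1]]`. -/
def Psparse (D : ℕ) : Matrix (Fin (D + 1)) (Fin (D + 1)) ℝ :=
  Matrix.of fun i j => if (i : ℕ) = D ∧ (j : ℕ) = D then 1 else 0

/-- `diag(Γ, 0)`: places `Γ` in the top-left `D × D` block. -/
def diagEmbed (D : ℕ) (Γ : Matrix (Fin D) (Fin D) ℝ) : Matrix (Fin (D + 1)) (Fin (D + 1)) ℝ :=
  Matrix.of fun i j =>
    if hi : (i : ℕ) < D then
      (if hj : (j : ℕ) < D then Γ ⟨(i : ℕ), hi⟩ ⟨(j : ℕ), hj⟩ else 0)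
    else 0

/-- Prompt whose `i`-th column is `(u_i, v_i)` for `i ≤ n` and last column `(u_{n+1}, 0)`. -/
def promptU (D n : ℕ) (u : Fin (n + 1) → Fin D → ℝ) (v : Fin n → ℝ) :
    Matrix (Fin (D + 1)) (Fin (n + 1)) ℝ :=
  Matrix.of fun i j =>
    if hi : (i : ℕ) < D then u j ⟨(i : ℕ), hi⟩
    else if hj : (j : ℕ) < n then v ⟨(j : ℕ), hj⟩ else 0

lemma attn_entry (D n : ℕ) (Γ : Matrix (Fin D) (Fin D) ℝ)
    (u : Fin (n + 1) → Fin D → ℝ) (v : Fin n → ℝ) :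
    attn D n (Psparse D) (diagEmbed D Γ) (promptU D n u v) (Fin.last D) (Fin.last n)
      = ∑ a, (∑ c, Γ a c * u (Fin.last n) c) * ((n : ℝ)⁻¹ * ∑ i, u i.castSucc a * v i) := by
  have hPZ : ∀ j, (Psparse D * promptU D n u v * attnMask n) (Fin.last D) j
      = if h : (j : ℕ) < n then v ⟨j, h⟩ else 0 := by
    intro j
    rw [attnMask, Matrix.mul_diagonal, Matrix.mul_apply, Fin.sum_univ_castSucc]
    have : ∀ x : Fin D, ¬ (x : ℕ) = D := fun x => x.2.ne
    simp only [Psparse, promptU, Matrix.of_apply]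
    simp [this]
    intro h h'
    subst h
    exact absurd h' (by simp)
  have hQ : ∀ j, ((promptU D n u v)ᵀ * diagEmbed D Γ * promptU D n u v) j (Fin.last n)
      = ∑ a, u j a * ∑ c, Γ a c * u (Fin.last n) c := by
    intro j
    rw [Matrix.mul_assoc, Matrix.mul_apply, Fin.sum_univ_castSucc]
    have h0 : ∀ k, (diagEmbed D Γ * promptU D n u v) (Fin.last D) k = 0 := by
      intro k
      rw [Matrix.mul_apply]
      simp [diagEmbed]
    have h1 : ∀ (a : Fin D) k, (diagEmbed D Γ * promptU D n u v) a.castSucc k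
        = ∑ c, Γ a c * u k c := by
      intro a k
      rw [Matrix.mul_apply, Fin.sum_univ_castSucc]
      simp [diagEmbed, promptU]
    rw [h0, mul_zero, add_zero]
    refine Finset.sum_congr rfl fun a _ => ?_
    rw [h1]
    simp [promptU]
  have hZ : promptU D n u v (Fin.last D) (Fin.last n) = 0 := by simp [promptU]
  rw [attn, Matrix.add_apply, hZ, zero_add, Matrix.smul_apply, Matrix.mul_apply]
  simp only [hPZ, hQ]
  rw [Fin.sum_univ_castSucc]
  simp only [Fin.val_castSucc, Fin.is_lt, dite_true, Fin.eta, Fin.val_last, lt_irrefl, dite_false,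
    zero_mul, add_zero, smul_eq_mul]
  simp only [Finset.mul_sum]
  rw [Finset.sum_comm]
  refine Finset.sum_congr rfl fun a _ => ?_
  refine Finset.sum_congr rfl fun i _ => ?_
  simp only [Finset.sum_mul]
  refine Finset.sum_congr rfl fun c _ => ?_
  ring

lemma integral_quad {Ω ι : Type*} [Fintype ι] [MeasurableSpace Ω] (ν : Measure Ω)
    (F : ι → Ω → ℝ) (V : Ω → ℝ)
    (hFF : ∀ a b, Integrable (fun x => F a x * F b x) ν)
    (hFV : ∀ a, Integrable (fun x => F a x * V x) ν)
    (hV : Integrable (fun x => V x ^ 2) ν) :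
    ∫ x, (∑ a, F a x + V x) ^ 2 ∂ν
      = ∑ a, ∑ b, ∫ x, F a x * F b x ∂ν + 2 * ∑ a, ∫ x, F a x * V x ∂ν + ∫ x, V x ^ 2 ∂ν := by
  have h1 : ∀ x, (∑ a, F a x + V x) ^ 2
      = (∑ a, ∑ b, F a x * F b x + 2 * ∑ a, F a x * V x) + V x ^ 2 := by
    intro x
    rw [← Finset.sum_mul_sum, ← Finset.sum_mul]
    ring
  have i1 : Integrable (fun x => ∑ a, ∑ b, F a x * F b x) ν :=
    integrable_finsetSum _ fun a _ => integrable_finsetSum _ fun b _ => hFF a b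
  have i2 : Integrable (fun x => 2 * ∑ a, F a x * V x) ν :=
    (integrable_finsetSum _ fun a _ => hFV a).const_mul 2
  simp_rw [h1]
  have i12 : Integrable (fun x => ∑ a, ∑ b, F a x * F b x + 2 * ∑ a, F a x * V x) ν := i1.add i2
  rw [integral_add i12 hV, integral_add i1 i2, integral_const_mul,
    integral_finsetSum _ fun a _ => hFV a,
    integral_finsetSum _ fun a _ => integrable_finsetSum _ fun b _ => hFF a b]
  have h3 : ∀ a, ∫ x, ∑ b, F a x * F b x ∂ν = ∑ b, ∫ x, F a x * F b x ∂ν := fun a =>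
    integral_finsetSum _ fun b _ => hFF a b
  simp only [h3]

lemma mean_moments {Ω : Type*} [MeasurableSpace Ω] (μ : Measure Ω) [IsProbabilityMeasure μ]
    (n : ℕ) (hn : 1 ≤ n) (X Y : Ω → ℝ) (hX : MemLp X 2 μ) (hY : MemLp Y 2 μ) :
    MemLp (fun ω : Fin n → Ω => (n : ℝ)⁻¹ * ∑ i, X (ω i)) 2 (Measure.pi fun _ => μ) ∧
    ∫ ω : Fin n → Ω, (n : ℝ)⁻¹ * ∑ i, X (ω i) ∂(Measure.pi fun _ => μ) = ∫ x, X x ∂μ ∧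
    ∫ ω : Fin n → Ω, ((n : ℝ)⁻¹ * ∑ i, X (ω i)) * ((n : ℝ)⁻¹ * ∑ i, Y (ω i))
      ∂(Measure.pi fun _ => μ)
      = (∫ x, X x ∂μ) * (∫ x, Y x ∂μ) + (n : ℝ)⁻¹ * cov[X, Y; μ] := by
  have hn0 : (n : ℝ) ≠ 0 := by positivity
  have hmp : ∀ i : Fin n, MeasurePreserving (fun ω : Fin n → Ω => ω i)
    (Measure.pi fun _ => μ) μ := fun i => measurePreserving_eval (fun _ => μ) i
  have hL : ∀ Z : Ω → ℝ, MemLp Z 2 μ → ∀ i : Fin n,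
      MemLp (fun ω : Fin n → Ω => Z (ω i)) 2 (Measure.pi fun _ => μ) := fun Z hZ i =>
    hZ.comp_measurePreserving (hmp i)
  have hm : ∀ Z : Ω → ℝ, MemLp Z 2 μ →
      MemLp (fun ω : Fin n → Ω => (n : ℝ)⁻¹ * ∑ i, Z (ω i)) 2 (Measure.pi fun _ => μ) :=
    fun Z hZ => (memLp_finsetSum _ fun i _ => hL Z hZ i).const_mul _
  have hI : ∀ Z : Ω → ℝ, MemLp Z 2 μ → ∀ i : Fin n,
      ∫ ω : Fin n → Ω, Z (ω i) ∂(Measure.pi fun _ => μ) = ∫ x, Z x ∂μ := by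
    intro Z hZ i
    have := integral_map (μ := Measure.pi fun _ : Fin n => μ) (hmp i).measurable.aemeasurable
      (f := Z) (by rw [(hmp i).map_eq]; exact hZ.1)
    rw [(hmp i).map_eq] at this
    exact this.symm
  have hmean : ∀ Z : Ω → ℝ, MemLp Z 2 μ →
      ∫ ω : Fin n → Ω, (n : ℝ)⁻¹ * ∑ i, Z (ω i) ∂(Measure.pi fun _ => μ) = ∫ x, Z x ∂μ := by
    intro Z hZ
    rw [integral_const_mul, integral_finsetSum _ fun i _ => (hL Z hZ i).integrable (by norm_num)]
    simp only [hI Z hZ]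
    simp [hn0]
  refine ⟨hm X hX, hmean X hX, ?_⟩
  have hc := covariance_eq_sub (hm X hX) (hm Y hY)
  rw [hmean X hX, hmean Y hY, covariance_const_mul_left, covariance_const_mul_right,
    covariance_fun_sum_fun_sum (hL X hX) (hL Y hY)] at hc
  have hcov : ∀ i j : Fin n, cov[fun ω : Fin n → Ω => X (ω i), fun ω => Y (ω j);
      Measure.pi fun _ => μ] = if i = j then cov[X, Y; μ] else 0 := by
    intro i j
    split_ifs with h
    · subst h
      rw [← covariance_map_fun, (hmp i).map_eq]
      · rw [(hmp i).map_eq]; exact hX.1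
      · rw [(hmp i).map_eq]; exact hY.1
      · exact (hmp i).measurable.aemeasurable
    · refine IndepFun.covariance_eq_zero ?_ (hL X hX i) (hL Y hY j)
      have hind := (iIndepFun_pi (μ := fun _ : Fin n => μ) (X := fun _ x => x)
        fun _ => aemeasurable_id).indepFun h
      refine hind.comp₀ (hmp i).measurable.aemeasurable (hmp j).measurable.aemeasurable
        (φ := X) (ψ := Y) ?_ ?_
      · have := (hmp i).map_eq
        rw [this]; exact hX.1.aemeasurable
      · have := (hmp j).map_eq
        rw [this]; exact hY.1.aemeasurable
  simp only [hcov] at hc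
  simp at hc
  have : ∫ ω : Fin n → Ω, ((n : ℝ)⁻¹ * ∑ i, X (ω i)) * ((n : ℝ)⁻¹ * ∑ i, Y (ω i))
      ∂(Measure.pi fun _ => μ) = (n : ℝ)⁻¹ * ((n : ℝ)⁻¹ * (n * cov[X, Y; μ]))
        + (∫ x, X x ∂μ) * (∫ x, Y x ∂μ) := by linarith
  rw [this]
  field_simp
  ring

/-- exact expression for the ICL loss of a one-layer LSA with the sparse
weights `P = [[0,0],[0,1]]`, `Q = [[Γ,0],[0,0]]` on i.i.d. prompts from `𝒟`:
`E[(v̂ + v)²] = inf_β E[(⟨β,u⟩+v)²] + (1/n)·tr(Γ Λ Γᵀ Φ) + ξᵀ(Γᵀ+Λ⁻¹)ᵀ Λ (Γᵀ+Λ⁻¹) ξ`. -/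
theorem stmt5 (D n : ℕ) (hD : 1 ≤ D) (hn : 1 ≤ n)
    (μ : Measure ((Fin D → ℝ) × ℝ)) [IsProbabilityMeasure μ]
    (h4 : Integrable (fun p => ‖p.1‖ ^ 4) μ)
    (h22 : Integrable (fun p => p.2 ^ 2 * ‖p.1‖ ^ 2) μ)
    (h2 : Integrable (fun p => p.2 ^ 2) μ)
    (Λ Φ : Matrix (Fin D) (Fin D) ℝ) (ξ : Fin D → ℝ)
    (hΛ : Λ = Matrix.of fun i j => ∫ p, p.1 i * p.1 j ∂μ)
    (hΛinv : IsUnit Λ.det)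
    (hξ : ξ = fun i => ∫ p, p.1 i * p.2 ∂μ)
    (hΦ : Φ = Matrix.of fun i j => ∫ p, (p.1 i * p.2 - ξ i) * (p.1 j * p.2 - ξ j) ∂μ)
    (Γ : Matrix (Fin D) (Fin D) ℝ) :
    ∫ ω : Fin (n + 1) → (Fin D → ℝ) × ℝ,
        (attn D n (Psparse D) (diagEmbed D Γ)
            (promptU D n (fun t => (ω t).1) fun i => (ω i.castSucc).2)
            (Fin.last D) (Fin.last n)
          + (ω (Fin.last n)).2) ^ 2
        ∂(Measure.pi fun _ : Fin (n + 1) => μ)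
      = (⨅ β : Fin D → ℝ, ∫ p, (β ⬝ᵥ p.1 + p.2) ^ 2 ∂μ)
        + (n : ℝ)⁻¹ * (Γ * Λ * Γᵀ * Φ).trace
        + ξ ⬝ᵥ ((Γᵀ + Λ⁻¹)ᵀ * Λ * (Γᵀ + Λ⁻¹)).mulVec ξ := by
  have mu : ∀ i, Measurable fun p : (Fin D → ℝ) × ℝ => p.1 i := fun i => by fun_prop
  have mv : Measurable fun p : (Fin D → ℝ) × ℝ => p.2 := by fun_prop
  have Lv : MemLp (fun p : (Fin D → ℝ) × ℝ => p.2) 2 μ :=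
    (memLp_two_iff_integrable_sq mv.aestronglyMeasurable).2 h2
  have Lu : ∀ i, MemLp (fun p : (Fin D → ℝ) × ℝ => p.1 i) 2 μ := by
    intro i
    refine (memLp_two_iff_integrable_sq (mu i).aestronglyMeasurable).2 ?_
    refine (h4.add (integrable_const 1)).mono' ((mu i).pow_const 2).aestronglyMeasurable ?_
    filter_upwards with p
    have h := norm_le_pi_norm p.1 i
    have h' : ‖p.1 i‖ ^ 2 ≤ ‖p.1‖ ^ 2 := by gcongr
    simp only [norm_pow, Pi.add_apply]
    nlinarith [sq_nonneg (‖p.1‖ ^ 2 - 1), sq_nonneg (‖p.1‖ ^ 2)]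
  have Lx : ∀ i, MemLp (fun p : (Fin D → ℝ) × ℝ => p.1 i * p.2) 2 μ := by
    intro i
    refine (memLp_two_iff_integrable_sq ((mu i).mul mv).aestronglyMeasurable).2 ?_
    refine h22.mono' (((mu i).mul mv).pow_const 2).aestronglyMeasurable ?_
    filter_upwards with p
    have h := norm_le_pi_norm p.1 i
    have h' : ‖p.1 i‖ ^ 2 ≤ ‖p.1‖ ^ 2 := by gcongr
    simp only [Pi.mul_apply, norm_pow, norm_mul, mul_pow]
    rw [Real.norm_eq_abs p.2, sq_abs]
    nlinarith [sq_nonneg p.2]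
  have Iuu : ∀ i j, Integrable (fun p : (Fin D → ℝ) × ℝ => p.1 i * p.1 j) μ :=
    fun i j => (Lu i).integrable_mul (Lu j)
  have Iuv : ∀ i, Integrable (fun p : (Fin D → ℝ) × ℝ => p.1 i * p.2) μ :=
    fun i => (Lu i).integrable_mul Lv
  have eΛ : ∀ i j, ∫ p, p.1 i * p.1 j ∂μ = Λ i j := by intro i j; rw [hΛ]; rfl
  have eξ : ∀ i, ∫ p, p.1 i * p.2 ∂μ = ξ i := by intro i; rw [hξ]
  have eΦ : ∀ i j, cov[fun p : (Fin D → ℝ) × ℝ => p.1 i * p.2, fun p => p.1 j * p.2; μ]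
      = Φ i j := by
    intro i j
    rw [hΦ, covariance]
    simp only [eξ, Matrix.of_apply]
  have sΦ : ∀ i j, Φ i j = Φ j i := by
    intro i j; rw [← eΦ, ← eΦ, covariance_comm]
  have sΛ : Λᵀ = Λ := by
    ext i j
    rw [Matrix.transpose_apply, ← eΛ, ← eΛ]
    simp only [mul_comm]
  set c : ℝ := ∫ p, p.2 ^ 2 ∂μ with hc
  have quad : ∀ (β : Fin D → ℝ) (s : ℝ), ∫ p, (β ⬝ᵥ p.1 + s * p.2) ^ 2 ∂μ
      = β ⬝ᵥ Λ *ᵥ β + 2 * (s * (β ⬝ᵥ ξ)) + s ^ 2 * c := by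
    intro β s
    have := integral_quad μ (fun a p => β a * p.1 a) (fun p => s * p.2)
      (fun a b => ((Iuu a b).const_mul (β a * β b)).congr (by filter_upwards with p; ring))
      (fun a => ((Iuv a).const_mul (β a * s)).congr (by filter_upwards with p; ring))
      ((h2.const_mul (s ^ 2)).congr (by filter_upwards with p; ring))
    simp only [dotProduct]
    rw [this]
    congr 1
    · congr 1
      · refine Finset.sum_congr rfl fun a _ => ?_
        rw [mulVec, dotProduct, Finset.mul_sum]
        refine Finset.sum_congr rfl fun b _ => ?_
        rw [← eΛ, ← integral_mul_const, ← integral_const_mul]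
        congr 1; ext p; ring
      · congr 1
        rw [Finset.mul_sum]
        refine Finset.sum_congr rfl fun a _ => ?_
        rw [← eξ, ← integral_const_mul, ← integral_const_mul]
        congr 1; ext p; ring
    · rw [hc, ← integral_const_mul]
      congr 1; ext p; ring
  have psd : ∀ β : Fin D → ℝ, 0 ≤ β ⬝ᵥ Λ *ᵥ β := by
    intro β
    have := quad β 0
    have h0 : 0 ≤ ∫ p, (β ⬝ᵥ p.1 + 0 * p.2) ^ 2 ∂μ := integral_nonneg fun p => sq_nonneg _
    rw [this] at h0
    simpa using h0
  have quad1 : ∀ β : Fin D → ℝ, ∫ p, (β ⬝ᵥ p.1 + p.2) ^ 2 ∂μ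
      = β ⬝ᵥ Λ *ᵥ β + 2 * (β ⬝ᵥ ξ) + c := by
    intro β
    simpa using quad β 1
  have hΛξ : Λ *ᵥ (Λ⁻¹ *ᵥ ξ) = ξ := by
    rw [mulVec_mulVec, Matrix.mul_nonsing_inv _ hΛinv, one_mulVec]
  have sq : ∀ x y : Fin D → ℝ, (x + y) ⬝ᵥ Λ *ᵥ (x + y)
      = x ⬝ᵥ Λ *ᵥ x + 2 * (x ⬝ᵥ Λ *ᵥ y) + y ⬝ᵥ Λ *ᵥ y := by
    intro x y
    have : y ⬝ᵥ Λ *ᵥ x = x ⬝ᵥ Λ *ᵥ y := by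
      rw [dotProduct_mulVec, ← mulVec_transpose, sΛ, dotProduct_comm]
    rw [mulVec_add, add_dotProduct, dotProduct_add, dotProduct_add, this]
    ring
  have hF : ∀ β : Fin D → ℝ, ∫ p, (β ⬝ᵥ p.1 + p.2) ^ 2 ∂μ
      = (β + Λ⁻¹ *ᵥ ξ) ⬝ᵥ Λ *ᵥ (β + Λ⁻¹ *ᵥ ξ) + (c - (Λ⁻¹ *ᵥ ξ) ⬝ᵥ ξ) := by
    intro β
    rw [quad1, sq, hΛξ]
    ring
  have hinf : (⨅ β : Fin D → ℝ, ∫ p, (β ⬝ᵥ p.1 + p.2) ^ 2 ∂μ) = c - (Λ⁻¹ *ᵥ ξ) ⬝ᵥ ξ := by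
    simp only [hF]
    apply le_antisymm
    · refine (ciInf_le ⟨c - (Λ⁻¹ *ᵥ ξ) ⬝ᵥ ξ, ?_⟩ (-(Λ⁻¹ *ᵥ ξ))).trans ?_
      · rintro _ ⟨β, rfl⟩
        have := psd (β + Λ⁻¹ *ᵥ ξ)
        simp only
        linarith
      · simp
    · refine le_ciInf fun β => ?_
      have := psd (β + Λ⁻¹ *ᵥ ξ)
      linarith
  have hthird : ξ ⬝ᵥ ((Γᵀ + Λ⁻¹)ᵀ * Λ * (Γᵀ + Λ⁻¹)).mulVec ξ
      = (Γᵀ *ᵥ ξ) ⬝ᵥ Λ *ᵥ (Γᵀ *ᵥ ξ) + 2 * ((Γᵀ *ᵥ ξ) ⬝ᵥ ξ) + (Λ⁻¹ *ᵥ ξ) ⬝ᵥ ξ := by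
    rw [← mulVec_mulVec, ← mulVec_mulVec, dotProduct_mulVec, vecMul_transpose, add_mulVec, sq, hΛξ]
  rw [hinf, hthird]
  -- the left-hand side
  set w : Fin D → (Fin n → (Fin D → ℝ) × ℝ) → ℝ :=
    fun a τ => (n : ℝ)⁻¹ * ∑ i, (τ i).1 a * (τ i).2 with hw
  set g : Fin D → (Fin D → ℝ) × ℝ → ℝ := fun a p => ∑ c, Γ a c * p.1 c with hg
  have Lg : ∀ a, MemLp (g a) 2 μ := fun a =>
    memLp_finsetSum _ fun c _ => (Lu c).const_mul _
  have Igg : ∀ a b, Integrable (fun p => g a p * g b p) μ :=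
    fun a b => (Lg a).integrable_mul (Lg b)
  have Igv : ∀ a, Integrable (fun p => g a p * p.2) μ := fun a => (Lg a).integrable_mul Lv
  have hmom := fun a b => mean_moments μ n hn _ _ (Lx a) (Lx b)
  have Lw : ∀ a, MemLp (w a) 2 (Measure.pi fun _ => μ) := fun a => (hmom a a).1
  have Ew : ∀ a, ∫ τ, w a τ ∂(Measure.pi fun _ => μ) = ξ a := by
    intro a; rw [← eξ]; exact (hmom a a).2.1
  have Eww : ∀ a b, ∫ τ, w a τ * w b τ ∂(Measure.pi fun _ => μ)
      = ξ a * ξ b + (n : ℝ)⁻¹ * Φ a b := by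
    intro a b
    have := (hmom a b).2.2
    rw [eξ, eξ, eΦ] at this
    exact this
  have Iww : ∀ a b, Integrable (fun τ => w a τ * w b τ) (Measure.pi fun _ => μ) :=
    fun a b => (Lw a).integrable_mul (Lw b)
  have Iw : ∀ a, Integrable (w a) (Measure.pi fun _ => μ) :=
    fun a => (Lw a).integrable (by norm_num)
  have Egg : ∀ a b, ∫ p, g a p * g b p ∂μ = (Γ * Λ * Γᵀ) a b := by
    intro a b
    have h1 : ∀ p, g a p * g b p = ∑ i, ∑ j, (Γ a j * Γ b i) * (p.1 j * p.1 i) := by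
      intro p
      simp only [hg]
      rw [Finset.sum_mul_sum, Finset.sum_comm]
      refine Finset.sum_congr rfl fun i _ => Finset.sum_congr rfl fun j _ => ?_
      ring
    simp only [h1]
    rw [integral_finsetSum _ fun i _ => integrable_finsetSum _ fun j _ => (Iuu j i).const_mul _,
      Matrix.mul_apply]
    refine Finset.sum_congr rfl fun i _ => ?_
    rw [integral_finsetSum _ fun j _ => (Iuu j i).const_mul _, Matrix.mul_apply, Finset.sum_mul]
    refine Finset.sum_congr rfl fun j _ => ?_
    rw [integral_const_mul, eΛ, Matrix.transpose_apply]
    ring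
  have Egv : ∀ a, ∫ p, g a p * p.2 ∂μ = (Γ *ᵥ ξ) a := by
    intro a
    have h1 : ∀ p : (Fin D → ℝ) × ℝ, g a p * p.2 = ∑ i, Γ a i * (p.1 i * p.2) := by
      intro p
      simp only [hg]
      rw [Finset.sum_mul]
      refine Finset.sum_congr rfl fun i _ => ?_
      ring
    simp only [h1]
    rw [integral_finsetSum _ fun i _ => (Iuv i).const_mul _, mulVec, dotProduct]
    refine Finset.sum_congr rfl fun i _ => ?_
    rw [integral_const_mul, eξ]
  have hpP : IsProbabilityMeasure (Measure.pi fun _ : Fin n => μ) := inferInstance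
  have hpF : IsFiniteMeasure (Measure.pi fun _ : Fin n => μ) := inferInstance
  have hpS : SFinite (Measure.pi fun _ : Fin n => μ) := inferInstance
  have hprod : ∫ z : ((Fin D → ℝ) × ℝ) × (Fin n → (Fin D → ℝ) × ℝ),
      (∑ a, g a z.1 * w a z.2 + z.1.2) ^ 2 ∂(μ.prod (Measure.pi fun _ => μ))
      = ∑ a, ∑ b, (Γ * Λ * Γᵀ) a b * (ξ a * ξ b + (n : ℝ)⁻¹ * Φ a b)
        + 2 * ∑ a, (Γ *ᵥ ξ) a * ξ a + c := by
    have e1 : ∀ (a b : Fin D) (z : ((Fin D → ℝ) × ℝ) × (Fin n → (Fin D → ℝ) × ℝ)),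
        (g a z.1 * w a z.2) * (g b z.1 * w b z.2) = (g a z.1 * g b z.1) * (w a z.2 * w b z.2) := by
      intro a b z; ring
    have e2 : ∀ (a : Fin D) (z : ((Fin D → ℝ) × ℝ) × (Fin n → (Fin D → ℝ) × ℝ)),
        (g a z.1 * w a z.2) * z.1.2 = (g a z.1 * z.1.2) * w a z.2 := by
      intro a z; ring
    rw [integral_quad (μ.prod (Measure.pi fun _ => μ)) (fun a z => g a z.1 * w a z.2)
      (fun z => z.1.2)]
    · congr 1
      · congr 1
        · refine Finset.sum_congr rfl fun a _ => Finset.sum_congr rfl fun b _ => ?_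
          simp only [e1]
          rw [integral_prod_mul (fun p => g a p * g b p) (fun τ => w a τ * w b τ), Egg, Eww]
        · congr 1
          refine Finset.sum_congr rfl fun a _ => ?_
          simp only [e2]
          rw [integral_prod_mul (fun p => g a p * p.2) (fun τ => w a τ), Egv, Ew]
      · have := integral_prod_mul (μ := μ) (ν := Measure.pi fun _ : Fin n => μ)
          (fun p => p.2 ^ 2) (fun _ => (1 : ℝ))
        simpa using this
    · intro a b
      simp only [e1]
      exact (Igg a b).mul_prod (Iww a b)
    · intro a
      simp only [e2]
      exact (Igv a).mul_prod (Iw a)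
    · exact h2.comp_fst _
  have hmp := measurePreserving_piFinSuccAbove (fun _ : Fin (n + 1) => μ) (Fin.last n)
  have hL := hmp.integral_comp' (fun z => (∑ a, g a z.1 * w a z.2 + z.1.2) ^ 2)
  rw [hprod] at hL
  have hLHS : ∀ ω : Fin (n + 1) → (Fin D → ℝ) × ℝ,
      (attn D n (Psparse D) (diagEmbed D Γ)
            (promptU D n (fun t => (ω t).1) fun i => (ω i.castSucc).2)
            (Fin.last D) (Fin.last n)
          + (ω (Fin.last n)).2) ^ 2
      = (∑ a, g a (MeasurableEquiv.piFinSuccAbove (fun _ => (Fin D → ℝ) × ℝ) (Fin.last n) ω).1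
          * w a (MeasurableEquiv.piFinSuccAbove (fun _ => (Fin D → ℝ) × ℝ) (Fin.last n) ω).2
          + (MeasurableEquiv.piFinSuccAbove (fun _ => (Fin D → ℝ) × ℝ) (Fin.last n) ω).1.2)
          ^ 2 := by
    intro ω
    rw [attn_entry]
    simp [hg, hw, MeasurableEquiv.piFinSuccAbove_apply, Fin.insertNthEquiv, Fin.removeNth,
      Fin.init]
  simp only [hLHS]
  refine hL.trans ?_
  have t1 : (Γ * Λ * Γᵀ * Φ).trace = ∑ a, ∑ b, (Γ * Λ * Γᵀ) a b * Φ a b := by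
    rw [Matrix.trace]
    refine Finset.sum_congr rfl fun a _ => ?_
    rw [Matrix.diag_apply, Matrix.mul_apply]
    refine Finset.sum_congr rfl fun b _ => ?_
    rw [sΦ]
  have t2 : (Γᵀ *ᵥ ξ) ⬝ᵥ Λ *ᵥ (Γᵀ *ᵥ ξ) = ∑ a, ∑ b, (Γ * Λ * Γᵀ) a b * (ξ a * ξ b) := by
    rw [mulVec_transpose, ← dotProduct_mulVec, ← mulVec_transpose, mulVec_mulVec, mulVec_mulVec,
      dotProduct]
    refine Finset.sum_congr rfl fun a _ => ?_
    rw [mulVec, dotProduct, Finset.mul_sum]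
    refine Finset.sum_congr rfl fun b _ => ?_
    ring
  have t3 : (Γᵀ *ᵥ ξ) ⬝ᵥ ξ = ∑ a, (Γ *ᵥ ξ) a * ξ a := by
    rw [mulVec_transpose, ← dotProduct_mulVec, dotProduct_comm]
    rfl
  rw [t1, t2, t3]
  have t4 : ∑ a, ∑ b, (Γ * Λ * Γᵀ) a b * (ξ a * ξ b + (n : ℝ)⁻¹ * Φ a b)
      = ∑ a, ∑ b, (Γ * Λ * Γᵀ) a b * (ξ a * ξ b)
        + (n : ℝ)⁻¹ * ∑ a, ∑ b, (Γ * Λ * Γᵀ) a b * Φ a b := by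
    simp only [Finset.mul_sum, ← Finset.sum_add_distrib]
    refine Finset.sum_congr rfl fun a _ => Finset.sum_congr rfl fun b _ => ?_
    ring
  rw [t4]
  ring
end
end

section
/- Let 𝒟_X be a probability distribution on ℝ^d and let g_1, …, g_m : ℝ^d → ℝ be measurable functions, orthonormal in L²(𝒟_X) (E[g_i·g_j] = δ_{ij}), each with finite moments of every order under 𝒟_X. Draw x_1, …, x_{n+1} i.i.d. from 𝒟_X and, independently, w ~ N(0, I_m); set y_i = f(x_i; w) where f(x; w) = Σ_{i=1}^m w_i·g_i(x). Let x̃ : ℝ^d → ℝ^D be any measurable map each of whose D coordinate functions has finite moments of every order under 𝒟_X, form the transformed prompt with i-th column (x̃(x_i), y_i) for i ≤ n and last column (x̃(x_{n+1}), 0), and let ŷ be the prediction (the (D+1, n+1) entry of the output) of any one-layer LSA applied to this prompt. Let d̃ be the dimension of the span, in L²(𝒟_X), of the orthogonal projections of the coordinate functions of x̃ onto span{g_1, …, g_m}. If d̃ < m, then E[(ŷ + y_{n+1})²] ≥ m − d̃. -/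
open MeasureTheory ProbabilityTheory Matrix

noncomputable section

lemma aux_proj0 (m D q : ℕ) (A : Fin D → Fin m → ℝ) (b : Fin q → Fin m → ℝ)
    (hb : ∀ a c, ∑ r, b a r * b c r = if a = c then 1 else 0)
    (h0 : ∀ k a, ∑ s, b a s * A k s = 0) :
    ∃ Pi : Fin m → Fin m → ℝ,
      (∀ k r, ∑ s, Pi r s * A k s = 0) ∧
      (∑ r, Pi r r = (q : ℝ)) ∧
      (∑ r, ∑ s, Pi r s * Pi r s = (q : ℝ)) := by
  refine ⟨fun r s => ∑ a, b a r * b a s, ?_, ?_, ?_⟩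
  · intro k r
    simp_rw [Finset.sum_mul]
    rw [Finset.sum_comm]
    refine Finset.sum_eq_zero fun a _ => ?_
    simp_rw [mul_assoc]
    rw [← Finset.mul_sum, h0, mul_zero]
  · rw [Finset.sum_comm]
    simp [hb]
  · have h3 : ∀ r, ∑ s, (∑ a, b a r * b a s) * (∑ a, b a r * b a s)
        = ∑ a, b a r * b a r := by
      intro r
      have : ∀ s, (∑ a, b a r * b a s) * (∑ a, b a r * b a s)
          = ∑ a, ∑ c, (b a r * b c r) * (b a s * b c s) := by
        intro s
        rw [Finset.sum_mul_sum]
        refine Finset.sum_congr rfl fun a _ => Finset.sum_congr rfl fun c _ => ?_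
        ring
      rw [Finset.sum_congr rfl fun s _ => this s]
      rw [Finset.sum_comm]
      refine Finset.sum_congr rfl fun a _ => ?_
      rw [Finset.sum_comm]
      simp_rw [← Finset.mul_sum, hb]
      simp
    rw [Finset.sum_congr rfl fun r _ => h3 r]
    rw [Finset.sum_comm]
    simp [hb]

lemma aux_proj (m D : ℕ) (A : Fin D → Fin m → ℝ) :
    ∃ Pi : Fin m → Fin m → ℝ,
      (∀ k r, ∑ s, Pi r s * A k s = 0) ∧
      (∑ r, Pi r r = ((m - Module.finrank ℝ (Submodule.span ℝ (Set.range A)) : ℕ) : ℝ)) ∧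
      (∑ r, ∑ s, Pi r s * Pi r s
        = ((m - Module.finrank ℝ (Submodule.span ℝ (Set.range A)) : ℕ) : ℝ)) := by
  set e : (Fin m → ℝ) ≃ₗ[ℝ] EuclideanSpace ℝ (Fin m) := (WithLp.linearEquiv 2 ℝ (Fin m → ℝ)).symm
  set V : Submodule ℝ (EuclideanSpace ℝ (Fin m)) :=
    (Submodule.span ℝ (Set.range A)).map (e : (Fin m → ℝ) →ₗ[ℝ] EuclideanSpace ℝ (Fin m)) with hV
  have hfr : Module.finrank ℝ V = Module.finrank ℝ (Submodule.span ℝ (Set.range A)) :=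
    LinearEquiv.finrank_map_eq e _
  have hq : m - Module.finrank ℝ (Submodule.span ℝ (Set.range A)) = Module.finrank ℝ Vᗮ := by
    have := V.finrank_add_finrank_orthogonal
    rw [finrank_euclideanSpace_fin] at this
    omega
  rw [hq]
  set b := stdOrthonormalBasis ℝ Vᗮ
  have hb : ∀ a c, ∑ r, (b a : EuclideanSpace ℝ (Fin m)) r * (b c : EuclideanSpace ℝ (Fin m)) r
      = if a = c then 1 else 0 := by
    intro a c
    have := orthonormal_iff_ite.1 b.orthonormal a c
    rw [← this, Submodule.coe_inner, PiLp.inner_apply]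
    refine Finset.sum_congr rfl fun r _ => ?_
    exact mul_comm _ _
  have h0 : ∀ k a, ∑ s, (b a : EuclideanSpace ℝ (Fin m)) s * A k s = 0 := by
    intro k a
    have h1 : e (A k) ∈ V := Submodule.mem_map_of_mem (Submodule.subset_span ⟨k, rfl⟩)
    have h2 := Submodule.inner_left_of_mem_orthogonal h1 (b a).2
    rw [PiLp.inner_apply] at h2
    rw [← h2]
    refine Finset.sum_congr rfl fun s _ => ?_
    exact mul_comm _ _
  exact aux_proj0 m D _ A (fun a r => (b a : EuclideanSpace ℝ (Fin m)) r) hb h0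

/-- finite moments of all orders -/
def AllMom {Ω : Type*} [MeasurableSpace Ω] (ν : Measure Ω) (f : Ω → ℝ) : Prop :=
  ∀ k : ℕ, MemLp f (k : ENNReal) ν

lemma AllMom.add {Ω : Type*} [MeasurableSpace Ω] {ν : Measure Ω} {f g : Ω → ℝ}
    (hf : AllMom ν f) (hg : AllMom ν g) : AllMom ν (fun x => f x + g x) :=
  fun k => (hf k).add (hg k)

lemma AllMom.mul {Ω : Type*} [MeasurableSpace Ω] {ν : Measure Ω} {f g : Ω → ℝ}
    (hf : AllMom ν f) (hg : AllMom ν g) : AllMom ν (fun x => f x * g x) := by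
  intro k
  have h : ENNReal.HolderTriple ((2 * k : ℕ) : ENNReal) ((2 * k : ℕ) : ENNReal) (k : ENNReal) := by
    constructor
    push_cast
    rw [ENNReal.mul_inv (by simp) (by simp), ← add_mul, ENNReal.inv_two_add_inv_two, one_mul]
  exact (hg (2 * k)).mul' (hf (2 * k))

lemma AllMom.sum {Ω : Type*} [MeasurableSpace Ω] {ν : Measure Ω} {ι : Type*} [Fintype ι]
    {f : ι → Ω → ℝ}
    (hf : ∀ i, AllMom ν (f i)) : AllMom ν (fun x => ∑ i, f i x) :=
  fun k => memLp_finsetSum _ fun i _ => hf i k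

lemma AllMom.const {Ω : Type*} [MeasurableSpace Ω] {ν : Measure Ω} [IsProbabilityMeasure ν]
    (c : ℝ) : AllMom ν (fun _ => c) :=
  fun k => memLp_const c

lemma AllMom.integrable {Ω : Type*} [MeasurableSpace Ω] {ν : Measure Ω} {f : Ω → ℝ}
    (hf : AllMom ν f) : Integrable f ν := by
  have := hf 1
  rw [Nat.cast_one] at this
  exact memLp_one_iff_integrable.1 this

lemma AllMom.comp {Ω Ω' : Type*} [MeasurableSpace Ω] [MeasurableSpace Ω'] {ν : Measure Ω}
    {ν' : Measure Ω'} {f : Ω → ℝ} {φ : Ω' → Ω} (hf : AllMom ν f) (hφ : MeasurePreserving φ ν' ν) :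
    AllMom ν' (fun x => f (φ x)) :=
  fun k => (hf k).comp_measurePreserving hφ

lemma AllMom.of_moments {Ω : Type*} [MeasurableSpace Ω] {ν : Measure Ω} {f : Ω → ℝ}
    (hf : Measurable f) (h : ∀ k : ℕ, Integrable (fun x => |f x| ^ k) ν) : AllMom ν f := by
  intro k
  rcases Nat.eq_zero_or_pos k with rfl | hk
  · simpa using hf.aestronglyMeasurable
  · rw [← integrable_norm_rpow_iff hf.aestronglyMeasurable (by simpa using hk.ne') (by simp)]
    simpa using h k

lemma gauss_cov (m : ℕ) (r t : Fin m) :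
    ∫ w : Fin m → ℝ, w r * w t ∂(Measure.pi fun _ : Fin m => gaussianReal 0 1)
      = if r = t then 1 else 0 := by
  have h1 : ∫ x : ℝ, x ∂(gaussianReal 0 1) = 0 := integral_id_gaussianReal
  split_ifs with h
  · subst h
    rw [integral_comp_eval (μ := fun _ : Fin m => gaussianReal 0 1) (i := r)
      (f := fun x : ℝ => x * x) (by fun_prop)]
    have h2 : Var[id; gaussianReal 0 1] = ((1 : NNReal) : ℝ) := variance_id_gaussianReal
    rw [variance_eq_integral (by fun_prop)] at h2
    simp only [id, h1, sub_zero] at h2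
    simpa [sq] using h2
  · have hi := iIndepFun_pi (μ := fun _ : Fin m => gaussianReal 0 1) (X := fun _ x => x)
      (fun i => by fun_prop)
    have := (hi.indepFun h).integral_fun_mul_eq_mul_integral
      (measurable_pi_apply r).aestronglyMeasurable (measurable_pi_apply t).aestronglyMeasurable
    rw [this, integral_comp_eval (μ := fun _ : Fin m => gaussianReal 0 1) (i := r)
      (f := fun x : ℝ => x) (by fun_prop), h1, zero_mul]

lemma fact (d m n : ℕ) (μ : Measure (Fin d → ℝ)) [IsProbabilityMeasure μ]
    (F : (Fin n → Fin d → ℝ) × (Fin m → ℝ) → ℝ) (G : (Fin d → ℝ) → ℝ) :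
    ∫ ω : (Fin (n + 1) → Fin d → ℝ) × (Fin m → ℝ),
      F (fun j => ω.1 j.castSucc, ω.2) * G (ω.1 (Fin.last n))
      ∂((Measure.pi fun _ : Fin (n + 1) => μ).prod
              (Measure.pi fun _ : Fin m => gaussianReal 0 1))
    = (∫ z, F z ∂((Measure.pi fun _ : Fin n => μ).prod
              (Measure.pi fun _ : Fin m => gaussianReal 0 1))) * ∫ x, G x ∂μ := by
  have h1 := (measurePreserving_piFinSuccAbove (fun _ : Fin (n + 1) => μ) (Fin.last n)).prod
    (MeasurePreserving.id (Measure.pi fun _ : Fin m => gaussianReal 0 1))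
  have h2 := h1.integral_comp ((MeasurableEquiv.prodCongr
    (MeasurableEquiv.piFinSuccAbove (fun _ : Fin (n + 1) => Fin d → ℝ) (Fin.last n))
    (MeasurableEquiv.refl (Fin m → ℝ))).measurableEmbedding)
    (fun z : ((Fin d → ℝ) × (Fin n → Fin d → ℝ)) × (Fin m → ℝ) => F (z.1.2, z.2) * G z.1.1)
  have h3 := (measurePreserving_prodAssoc μ (Measure.pi fun _ : Fin n => μ)
    (Measure.pi fun _ : Fin m => gaussianReal 0 1)).integral_comp
    (MeasurableEquiv.measurableEmbedding _)
    (fun z : (Fin d → ℝ) × (Fin n → Fin d → ℝ) × (Fin m → ℝ) => G z.1 * F z.2)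
  rw [integral_prod_mul] at h3
  rw [mul_comm, ← h3]
  refine Eq.trans ?_ (h2.trans ?_)
  · refine integral_congr_ae (Filter.Eventually.of_forall fun ω => ?_)
    have e0 : Fin.init ω.1 = fun j => ω.1 j.castSucc := rfl
    simp [MeasurableEquiv.piFinSuccAbove, Fin.insertNthEquiv, e0]
  · refine integral_congr_ae (Filter.Eventually.of_forall fun ω => ?_)
    simp [MeasurableEquiv.prodAssoc, mul_comm]

/-- the coefficient in front of `xt (x_{n+1}) k` -/
def coefC (d m D n : ℕ) (g : Fin m → (Fin d → ℝ) → ℝ) (xt : (Fin d → ℝ) → Fin D → ℝ)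
    (P Q : Matrix (Fin (D + 1)) (Fin (D + 1)) ℝ) (k : Fin D)
    (z : (Fin n → Fin d → ℝ) × (Fin m → ℝ)) : ℝ :=
  (n : ℝ)⁻¹ * ∑ j : Fin n,
    ((∑ i : Fin D, P (Fin.last D) i.castSucc * xt (z.1 j) i)
      + P (Fin.last D) (Fin.last D) * ∑ r, z.2 r * g r (z.1 j)) *
    ((∑ i : Fin D, xt (z.1 j) i * Q i.castSucc k.castSucc)
      + (∑ r, z.2 r * g r (z.1 j)) * Q (Fin.last D) k.castSucc)

lemma attn_eq (d m D n : ℕ) (g : Fin m → (Fin d → ℝ) → ℝ) (xt : (Fin d → ℝ) → Fin D → ℝ)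
    (P Q : Matrix (Fin (D + 1)) (Fin (D + 1)) ℝ)
    (ω : (Fin (n + 1) → Fin d → ℝ) × (Fin m → ℝ)) :
    attn D n P Q (promptU D n (fun t => xt (ω.1 t))
                fun i => ∑ r, ω.2 r * g r (ω.1 i.castSucc)) (Fin.last D) (Fin.last n)
    = ∑ k, coefC d m D n g xt P Q k (fun j => ω.1 j.castSucc, ω.2) * xt (ω.1 (Fin.last n)) k := by
  simp only [attn, attnMask, coefC, Matrix.add_apply, Matrix.smul_apply, smul_eq_mul]
  rw [Matrix.mul_apply, Fin.sum_univ_castSucc]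
  simp only [Matrix.mul_diagonal]
  simp only [Matrix.mul_apply, Fin.sum_univ_castSucc, promptU, Matrix.of_apply, Matrix.transpose_apply]
  simp [Fin.castSucc_ne_last]
  simp_rw [Finset.mul_sum, Finset.sum_mul]
  rw [Finset.sum_comm]
  refine Finset.sum_congr rfl fun k _ => Finset.sum_congr rfl fun j _ => ?_
  simp_rw [← Finset.mul_sum, ← Finset.sum_mul]
  ring

/-- general nonlinear ICL lower bound.  For orthonormal features
`g_1, …, g_m` in `L²(𝒟_X)`, random targets `f(·; w) = Σ wᵢ gᵢ` with `w ~ N(0, I_m)`, and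
any kernel map `x̃ : ℝ^d → ℝ^D`, if the span of the orthogonal projections of the
coordinates of `x̃` onto `span{g₁, …, g_m}` (encoded via the coefficient vectors
`(E[gᵢ·x̃ₖ])ᵢ`) has dimension `d̃ < m`, then every one-layer LSA on the transformed
prompt incurs ICL loss at least `m - d̃`. -/
theorem stmt19 (d m D n : ℕ) (hd : 1 ≤ d) (hm : 1 ≤ m) (hD : 1 ≤ D) (hn : 1 ≤ n)
    (μ : Measure (Fin d → ℝ)) [IsProbabilityMeasure μ]
    (g : Fin m → (Fin d → ℝ) → ℝ) (hgmeas : ∀ i, Measurable (g i))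
    (hortho : ∀ i j, (∫ x, g i x * g j x ∂μ) = if i = j then 1 else 0)
    (hgmom : ∀ (i : Fin m) (k : ℕ), Integrable (fun x => |g i x| ^ k) μ)
    (xt : (Fin d → ℝ) → Fin D → ℝ) (hxt : Measurable xt)
    (hxtmom : ∀ (j : Fin D) (k : ℕ), Integrable (fun x => |xt x j| ^ k) μ)
    (P Q : Matrix (Fin (D + 1)) (Fin (D + 1)) ℝ)
    (dt : ℕ)
    (hdt : dt = Module.finrank ℝ (Submodule.span ℝ (Set.range fun k : Fin D =>
      fun i : Fin m => ∫ x, g i x * xt x k ∂μ)))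
    (hlt : dt < m) :
    ((m - dt : ℕ) : ℝ)
      ≤ ∫ ω : (Fin (n + 1) → Fin d → ℝ) × (Fin m → ℝ),
          (attn D n P Q
              (promptU D n (fun t => xt (ω.1 t))
                fun i => ∑ r, ω.2 r * g r (ω.1 i.castSucc))
              (Fin.last D) (Fin.last n)
            + ∑ r, ω.2 r * g r (ω.1 (Fin.last n))) ^ 2
          ∂((Measure.pi fun _ : Fin (n + 1) => μ).prod
              (Measure.pi fun _ : Fin m => gaussianReal 0 1)) := by
  set A : Fin D → Fin m → ℝ := fun k i => ∫ x, g i x * xt x k ∂μ with hA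
  obtain ⟨Pi, hPi0, hPitr, hPisq⟩ := aux_proj m D A
  rw [← hdt] at hPitr hPisq
  set ν := (Measure.pi fun _ : Fin (n + 1) => μ).prod
              (Measure.pi fun _ : Fin m => gaussianReal 0 1) with hν
  simp_rw [attn_eq]
  have mg : ∀ r t, AllMom ν (fun ω => g r (ω.1 t)) := fun r t =>
    ((AllMom.of_moments (hgmeas r) (hgmom r)).comp
      (measurePreserving_eval (fun _ : Fin (n + 1) => μ) t)).comp measurePreserving_fst
  have mx : ∀ k t, AllMom ν (fun ω => xt (ω.1 t) k) := fun k t =>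
    ((AllMom.of_moments (f := fun x => xt x k) (by fun_prop) (hxtmom k)).comp
      (measurePreserving_eval (fun _ : Fin (n + 1) => μ) t)).comp measurePreserving_fst
  have hG : AllMom (gaussianReal 0 1) (fun x => x) := fun k =>
    memLp_id_gaussianReal' (k : ENNReal) (by simp)
  have mw : ∀ r, AllMom ν (fun ω => ω.2 r) := fun r =>
    (hG.comp (measurePreserving_eval (fun _ : Fin m => gaussianReal 0 1) r)).comp
      measurePreserving_snd
  have my : ∀ t, AllMom ν (fun ω => ∑ r, ω.2 r * g r (ω.1 t)) := fun t =>
    AllMom.sum fun r => (mw r).mul (mg r t)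
  have mc : ∀ k, AllMom ν (fun ω => coefC d m D n g xt P Q k (fun j => ω.1 j.castSucc, ω.2)) := by
    intro k
    unfold coefC
    refine (AllMom.const _).mul (AllMom.sum fun j => AllMom.mul (AllMom.add ?_ ?_) (AllMom.add ?_ ?_))
    · exact AllMom.sum fun i => (AllMom.const _).mul (mx i _)
    · exact (AllMom.const _).mul (my _)
    · exact AllMom.sum fun i => (mx i _).mul (AllMom.const _)
    · exact (my _).mul (AllMom.const _)
  -- the test function
  set S : (Fin (n + 1) → Fin d → ℝ) × (Fin m → ℝ) → ℝ :=
    fun ω => ∑ r, ∑ s, Pi r s * (ω.2 r * g s (ω.1 (Fin.last n))) with hS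
  set Y : (Fin (n + 1) → Fin d → ℝ) × (Fin m → ℝ) → ℝ :=
    fun ω => ∑ r, ω.2 r * g r (ω.1 (Fin.last n)) with hY
  set H : (Fin (n + 1) → Fin d → ℝ) × (Fin m → ℝ) → ℝ :=
    fun ω => ∑ k, coefC d m D n g xt P Q k (fun j => ω.1 j.castSucc, ω.2)
      * xt (ω.1 (Fin.last n)) k with hH
  have mS : AllMom ν S := AllMom.sum fun r => AllMom.sum fun s =>
    (AllMom.const _).mul ((mw r).mul (mg s _))
  have mY : AllMom ν Y := my _
  have mH : AllMom ν H := AllMom.sum fun k => (mc k).mul (mx k _)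
  have cov : ∀ r s t u, ∫ ω, (ω.2 r * g s (ω.1 (Fin.last n))) * (ω.2 t * g u (ω.1 (Fin.last n))) ∂ν
      = (if r = t then 1 else 0) * (if s = u then 1 else 0) := by
    intro r s t u
    have h := fact d m n μ (fun z => z.2 r * z.2 t) (fun x => g s x * g u x)
    rw [hortho, integral_fun_snd (fun w : Fin m → ℝ => w r * w t), gauss_cov] at h
    simp only [probReal_univ, one_smul] at h
    rw [← h]
    refine integral_congr_ae (Filter.Eventually.of_forall fun ω => ?_)
    simp only
    ring
  have covI : ∀ r s t u, Integrable
      (fun ω => (ω.2 r * g s (ω.1 (Fin.last n))) * (ω.2 t * g u (ω.1 (Fin.last n)))) ν :=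
    fun r s t u => (((mw r).mul (mg s _)).mul ((mw t).mul (mg u _))).integrable
  have hYS : ∫ ω, Y ω * S ω ∂ν = ((m - dt : ℕ) : ℝ) := by
    have e1 : ∀ ω, Y ω * S ω = ∑ r, ∑ s, ∑ t, Pi r s *
        ((ω.2 r * g s (ω.1 (Fin.last n))) * (ω.2 t * g t (ω.1 (Fin.last n)))) := by
      intro ω
      rw [mul_comm]
      simp only [hS, hY]
      rw [Finset.sum_mul]
      refine Finset.sum_congr rfl fun r _ => ?_
      rw [Finset.sum_mul]
      refine Finset.sum_congr rfl fun s _ => ?_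
      rw [Finset.mul_sum]
      refine Finset.sum_congr rfl fun t _ => ?_
      ring
    simp_rw [e1]
    rw [integral_finsetSum _ fun r _ => integrable_finsetSum _ fun s _ =>
      integrable_finsetSum _ fun t _ => (covI r s t t).const_mul _]
    rw [← hPitr]
    refine Finset.sum_congr rfl fun r _ => ?_
    rw [integral_finsetSum _ fun s _ =>
      integrable_finsetSum _ fun t _ => (covI r s t t).const_mul _]
    have : ∀ s, ∫ ω, ∑ t, Pi r s *
        ((ω.2 r * g s (ω.1 (Fin.last n))) * (ω.2 t * g t (ω.1 (Fin.last n)))) ∂ν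
        = if s = r then Pi r r else 0 := by
      intro s
      rw [integral_finsetSum _ fun t _ => (covI r s t t).const_mul _]
      simp_rw [integral_const_mul, cov]
      by_cases h : s = r
      · subst h; simp
      · simp [h, Ne.symm h]
    simp [this]
  have hSS : ∫ ω, S ω * S ω ∂ν = ((m - dt : ℕ) : ℝ) := by
    have e1 : ∀ ω, S ω * S ω = ∑ r, ∑ s, ∑ t, ∑ u, (Pi r s * Pi t u) *
        ((ω.2 r * g s (ω.1 (Fin.last n))) * (ω.2 t * g u (ω.1 (Fin.last n)))) := by
      intro ω
      simp only [hS]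
      rw [Finset.sum_mul]
      refine Finset.sum_congr rfl fun r _ => ?_
      rw [Finset.sum_mul]
      refine Finset.sum_congr rfl fun s _ => ?_
      rw [Finset.mul_sum]
      refine Finset.sum_congr rfl fun t _ => ?_
      rw [Finset.mul_sum]
      refine Finset.sum_congr rfl fun u _ => ?_
      ring
    simp_rw [e1]
    rw [← hPisq]
    rw [integral_finsetSum _ fun r _ => integrable_finsetSum _ fun s _ =>
      integrable_finsetSum _ fun t _ => integrable_finsetSum _ fun u _ =>
      (covI r s t u).const_mul _]
    refine Finset.sum_congr rfl fun r _ => ?_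
    rw [integral_finsetSum _ fun s _ =>
      integrable_finsetSum _ fun t _ => integrable_finsetSum _ fun u _ =>
      (covI r s t u).const_mul _]
    refine Finset.sum_congr rfl fun s _ => ?_
    rw [integral_finsetSum _ fun t _ => integrable_finsetSum _ fun u _ =>
      (covI r s t u).const_mul _]
    have : ∀ t, ∫ ω, ∑ u, (Pi r s * Pi t u) *
        ((ω.2 r * g s (ω.1 (Fin.last n))) * (ω.2 t * g u (ω.1 (Fin.last n)))) ∂ν
        = if r = t then Pi r s * Pi t s else 0 := by
      intro t
      rw [integral_finsetSum _ fun u _ => (covI r s t u).const_mul _]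
      simp_rw [integral_const_mul, cov]
      by_cases h : r = t
      · subst h; simp
      · simp [h]
    simp [this]
  have hHS : ∫ ω, H ω * S ω ∂ν = 0 := by
    have e1 : ∀ ω, H ω * S ω = ∑ k, ∑ r, ∑ s, Pi r s *
        ((coefC d m D n g xt P Q k (fun j => ω.1 j.castSucc, ω.2) * ω.2 r) *
          (g s (ω.1 (Fin.last n)) * xt (ω.1 (Fin.last n)) k)) := by
      intro ω
      simp only [hS, hH]
      rw [Finset.sum_mul]
      refine Finset.sum_congr rfl fun k _ => ?_
      rw [Finset.mul_sum]
      refine Finset.sum_congr rfl fun r _ => ?_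
      rw [Finset.mul_sum]
      refine Finset.sum_congr rfl fun s _ => ?_
      ring
    have hI : ∀ k r s, Integrable (fun ω => Pi r s *
        ((coefC d m D n g xt P Q k (fun j => ω.1 j.castSucc, ω.2) * ω.2 r) *
          (g s (ω.1 (Fin.last n)) * xt (ω.1 (Fin.last n)) k))) ν := fun k r s =>
      ((AllMom.const _).mul (((mc k).mul (mw r)).mul ((mg s _).mul (mx k _)))).integrable
    simp_rw [e1]
    rw [integral_finsetSum _ fun k _ => integrable_finsetSum _ fun r _ =>
      integrable_finsetSum _ fun s _ => hI k r s]
    refine Finset.sum_eq_zero fun k _ => ?_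
    rw [integral_finsetSum _ fun r _ => integrable_finsetSum _ fun s _ => hI k r s]
    refine Finset.sum_eq_zero fun r _ => ?_
    rw [integral_finsetSum _ fun s _ => hI k r s]
    have : ∀ s, ∫ ω, Pi r s *
        ((coefC d m D n g xt P Q k (fun j => ω.1 j.castSucc, ω.2) * ω.2 r) *
          (g s (ω.1 (Fin.last n)) * xt (ω.1 (Fin.last n)) k)) ∂ν
        = (∫ z, coefC d m D n g xt P Q k z * z.2 r ∂((Measure.pi fun _ : Fin n => μ).prod
              (Measure.pi fun _ : Fin m => gaussianReal 0 1))) * (Pi r s * A k s) := by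
      intro s
      rw [integral_const_mul]
      have h := fact d m n μ (fun z => coefC d m D n g xt P Q k z * z.2 r)
        (fun x => g s x * xt x k)
      simp only at h
      rw [h]
      simp only [hA]
      ring
    simp_rw [this]
    rw [← Finset.mul_sum, hPi0, mul_zero]
  have mT : AllMom ν (fun ω => H ω + Y ω) := mH.add mY
  have iT : Integrable (fun ω => (H ω + Y ω) ^ 2) ν := by
    simpa only [sq] using (mT.mul mT).integrable
  have iHS := (mH.mul mS).integrable
  have iYS := (mY.mul mS).integrable
  have iSS := (mS.mul mS).integrable
  have key : ∫ ω, (2 * (H ω * S ω + Y ω * S ω) - S ω * S ω) ∂ν ≤ ∫ ω, (H ω + Y ω) ^ 2 ∂ν := by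
    refine integral_mono (((iHS.add iYS).const_mul 2).sub iSS) iT fun ω => ?_
    simp only
    nlinarith [sq_nonneg (H ω + Y ω - S ω)]
  have iadd : Integrable (fun ω => 2 * (H ω * S ω + Y ω * S ω)) ν := (iHS.add iYS).const_mul 2
  rw [integral_sub iadd iSS, integral_const_mul, integral_add iHS iYS,
    hHS, hYS, hSS] at key
  linarith
end
end
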